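/- arXiv:2512.00584 — 2 statements merged into one kernel-verified Lean document; each statement's English description precedes it below -/
import Mathlib

section
/- Let S = K[X_0,…,X_n] and let < be the lexicographic order with X_0 > X_1 > ⋯ > X_n. Then: (i) for any polynomial f ∈ S, some monomial divisible by X_0 lies in the support of f if and only if in_<(f) is divisible by X_0; and (ii) if I ⊆ S is a homogeneous ideal whose initial ideal in_<(I) is squarefree, then no monomial divisible by X_0^2 lies in the support of any element of the reduced Gröbner basis of I. -/
open MvPolynomial

/-- The leading exponent (multidegree) of a multivariate polynomial with respect to a
monomial order: the maximum of its support. (It is `0` for the zero polynomial.) -/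
noncomputable def MonomialOrder.mdeg {σ : Type*} (m : MonomialOrder σ) {R : Type*}
    [CommSemiring R] (f : MvPolynomial σ R) : σ →₀ ℕ :=
  m.toSyn.symm (f.support.sup fun e => m.toSyn e)

/-- The initial ideal of an ideal `I` with respect to a monomial order. -/
noncomputable def initialIdeal {σ : Type*} {K : Type*} [Field K] (m : MonomialOrder σ)
    (I : Ideal (MvPolynomial σ K)) : Ideal (MvPolynomial σ K) :=
  Ideal.span {g | ∃ f ∈ I, f ≠ 0 ∧ g = monomial (m.mdeg f) (1 : K)}

/-- A monomial ideal is squarefree if it is generated by squarefree monomials. -/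
def IsSquarefreeMonomialIdeal {σ : Type*} {K : Type*} [Field K]
    (J : Ideal (MvPolynomial σ K)) : Prop :=
  ∃ T : Set (σ →₀ ℕ), (∀ e ∈ T, ∀ i, e i ≤ 1) ∧
    J = Ideal.span ((fun e => monomial e (1 : K)) '' T)

/-- `G` is a Gröbner basis of `I` w.r.t. the monomial order `m`: a subset of `I` (of nonzero
elements) whose leading monomials generate the initial ideal of `I`. -/
def IsGroebnerBasis {σ : Type*} {K : Type*} [Field K] (m : MonomialOrder σ)
    (I : Ideal (MvPolynomial σ K)) (G : Set (MvPolynomial σ K)) : Prop :=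
  (G : Set (MvPolynomial σ K)) ⊆ I ∧ (0 : MvPolynomial σ K) ∉ G ∧
    initialIdeal m I = Ideal.span ((fun g => monomial (m.mdeg g) (1 : K)) '' G)

/-- `G` is the reduced Gröbner basis of `I`: a Gröbner basis whose elements are monic and
such that no monomial in the support of an element lies in the ideal generated by the leading
monomials of the other elements. -/
def IsReducedGroebnerBasis {σ : Type*} {K : Type*} [Field K] (m : MonomialOrder σ)
    (I : Ideal (MvPolynomial σ K)) (G : Set (MvPolynomial σ K)) : Prop :=
  IsGroebnerBasis m I G ∧ (∀ g ∈ G, coeff (m.mdeg g) g = 1) ∧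
    ∀ g ∈ G, ∀ e ∈ g.support,
      (monomial e (1 : K)) ∉ Ideal.span ((fun h => monomial (m.mdeg h) (1 : K)) '' (G \ {g}))

/-- An ideal is homogeneous (w.r.t. the standard grading) iff it contains all homogeneous
components of its elements. -/
def IsHomog {σ : Type*} {K : Type*} [Field K] (I : Ideal (MvPolynomial σ K)) : Prop :=
  ∀ f ∈ I, ∀ d : ℕ, homogeneousComponent d f ∈ I

theorem aux_lex_le_zero {n : ℕ} {a b : Fin (n + 1) →₀ ℕ} (h : toLex a ≤ toLex b) : a 0 ≤ b 0 := by
  rcases h.eq_or_lt with h | h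
  · have : a = b := toLex.injective h
    rw [this]
  · obtain ⟨i, hi, hlt⟩ := Finsupp.Lex.lt_iff.1 h
    rcases eq_or_ne i 0 with rfl | h0
    · exact le_of_lt hlt
    · exact le_of_eq (hi 0 (Fin.pos_of_ne_zero h0))

theorem aux_le_mdeg {K : Type*} [Field K] {n : ℕ} (f : MvPolynomial (Fin (n + 1)) K)
    {e : Fin (n + 1) →₀ ℕ} (he : e ∈ f.support) : e 0 ≤ (MonomialOrder.lex.mdeg f) 0 := by
  apply aux_lex_le_zero
  rw [← MonomialOrder.lex_le_iff]
  unfold MonomialOrder.mdeg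
  rw [AddEquiv.apply_symm_apply]
  exact Finset.le_sup (f := fun e => MonomialOrder.lex.toSyn e) he

theorem aux_mem_span {K : Type*} [Field K] {σ : Type*} (m : MonomialOrder σ)
    (G : Set (MvPolynomial σ K)) (e : σ →₀ ℕ) :
    monomial e (1 : K) ∈ Ideal.span ((fun h => monomial (m.mdeg h) (1 : K)) '' G) ↔
      ∃ h ∈ G, m.mdeg h ≤ e := by
  classical
  have : (fun h => monomial (m.mdeg h) (1 : K)) '' G =
      (fun s => monomial s (1 : K)) '' (m.mdeg '' G) := by
    rw [Set.image_image]
  rw [this, mem_ideal_span_monomial_image]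
  simp [support_monomial]

/-- **Statement 7.** For the lexicographic order with `X_0 > X_1 > ⋯ > X_n`:
(i) a polynomial `f` has a monomial divisible by `X_0` in its support iff its leading monomial
is divisible by `X_0`; and (ii) if `I` is a homogeneous ideal whose lex initial ideal is
squarefree, then no monomial divisible by `X_0^2` occurs in the support of any element of the
reduced Gröbner basis of `I`. -/
theorem lex_supp_X0_iff_and_reduced_GB_no_X0_sq {K : Type*} [Field K] {n : ℕ} :
    (∀ f : MvPolynomial (Fin (n + 1)) K,
      (∃ e ∈ f.support, 1 ≤ e 0) ↔ 1 ≤ (MonomialOrder.lex.mdeg f) 0) ∧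
    (∀ I : Ideal (MvPolynomial (Fin (n + 1)) K), IsHomog I →
      IsSquarefreeMonomialIdeal (initialIdeal MonomialOrder.lex I) →
      ∀ G : Set (MvPolynomial (Fin (n + 1)) K),
        IsReducedGroebnerBasis MonomialOrder.lex I G →
        ∀ g ∈ G, ∀ e ∈ g.support, e 0 ≤ 1) := by
  classical
  refine ⟨fun f => ⟨fun ⟨e, he, h1⟩ => h1.trans (aux_le_mdeg f he), fun h => ?_⟩, ?_⟩
  · by_cases hf : f = 0
    · subst hf
      simp [MonomialOrder.mdeg] at h
    · obtain ⟨e, he, heq⟩ := Finset.exists_mem_eq_sup f.support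
        (support_nonempty.2 hf) (fun e => MonomialOrder.lex.toSyn e)
      refine ⟨e, he, ?_⟩
      have : MonomialOrder.lex.mdeg f = e := by
        unfold MonomialOrder.mdeg
        rw [heq, AddEquiv.symm_apply_apply]
      rwa [this] at h
  · rintro I - ⟨T, hT, hIT⟩ G ⟨⟨hGI, hG0, hin⟩, hmon, hred⟩ g hg e he
    refine (aux_le_mdeg g he).trans ?_
    have hsupp : MonomialOrder.lex.mdeg g ∈ g.support := by
      rw [mem_support_iff, hmon g hg]
      exact one_ne_zero
    have h1 : monomial (MonomialOrder.lex.mdeg g) (1 : K) ∈ initialIdeal MonomialOrder.lex I := by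
      rw [hin, aux_mem_span]
      exact ⟨g, hg, le_rfl⟩
    rw [hIT, mem_ideal_span_monomial_image] at h1
    obtain ⟨t, ht, htg⟩ := h1 (MonomialOrder.lex.mdeg g) (by simp [support_monomial])
    have h2 : monomial t (1 : K) ∈ initialIdeal MonomialOrder.lex I := by
      rw [hIT]
      exact Ideal.subset_span ⟨t, ht, rfl⟩
    rw [hin, aux_mem_span] at h2
    obtain ⟨h, hh, hht⟩ := h2
    by_cases hhg : h = g
    · subst hhg
      exact (hht 0).trans (hT t ht 0)
    · exact absurd ((aux_mem_span _ (G \ {g}) _).2 ⟨h, ⟨hh, hhg⟩, hht.trans htg⟩)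
        (hred g hg _ hsupp)
end

section
/- Let K be an algebraically closed field, S = K[X_0,…,X_n], < a monomial order with X_0 > ⋯ > X_n, and I ⊆ S homogeneous with in_<(I) = I_Δ for a graph Δ on {0,…,n} containing every vertex; let X = V(I) ⊆ P^n, let π : P^n \ {P_0} → H_0 = {X_0 = 0} ≅ P^{n−1} be the projection from P_0 = [1:0:⋯:0], and let X' ⊆ P^{n−1} be the closure of π(X \ {P_0}), which is defined by I' = I ∩ K[X_1,…,X_n]. Assume 0 is a free vertex of Δ, and let {g_σ : σ ∈ mnf(Δ)} be a Gröbner basis of I with in_<(g_σ) = X_σ. Suppose a ∈ {1,…,n} is such that the coordinate point P'_a lies in X' and there exists j ∈ {1,…,n} with X_0 X_a ∈ supp(g_{0j}) (which holds automatically with j = a if {0,a} ∉ Δ). Then there exists a unique point Q ∈ X with π(Q) = P'_a, and X is singular at Q if and only if X' is singular at P'_a. -/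
open MvPolynomial

/-- A monomial order on `X_0, …, X_n` satisfies `X_0 > X_1 > ⋯ > X_n`. -/
def MonomialOrder.Descending {n : ℕ} (m : MonomialOrder (Fin (n + 1))) : Prop :=
  ∀ i j : Fin (n + 1), i < j →
    m.toSyn (Finsupp.single j 1) < m.toSyn (Finsupp.single i 1)

/-- An abstract simplicial complex on the vertex set `{0, …, n}`. -/
structure SComplex (n : ℕ) where
  faces : Set (Finset (Fin (n + 1)))
  down_closed : ∀ {s t : Finset (Fin (n + 1))}, s ∈ faces → t ⊆ s → t ∈ faces

/-- A simplicial complex is 1-dimensional (a graph) if all faces have at most 2 vertices and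
some face has exactly 2 vertices. -/
def SComplex.IsGraph {n : ℕ} (Δ : SComplex n) : Prop :=
  (∀ s ∈ Δ.faces, s.card ≤ 2) ∧ ∃ s ∈ Δ.faces, s.card = 2

/-- The set of minimal non-faces of a simplicial complex. -/
def SComplex.mnf {n : ℕ} (Δ : SComplex n) : Set (Finset (Fin (n + 1))) :=
  {s | s ∉ Δ.faces ∧ ∀ t ⊂ s, t ∈ Δ.faces}

/-- The Stanley–Reisner ideal of a simplicial complex. -/
noncomputable def SComplex.srIdeal {n : ℕ} (K : Type*) [Field K] (Δ : SComplex n) :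
    Ideal (MvPolynomial (Fin (n + 1)) K) :=
  Ideal.span {g | ∃ s : Finset (Fin (n + 1)), s ∉ Δ.faces ∧ g = ∏ i ∈ s, X i}

/-- A vertex of a graph is free if it belongs to exactly one edge. -/
def SComplex.FreeVertex {n : ℕ} (Δ : SComplex n) (v : Fin (n + 1)) : Prop :=
  ∃! e : Finset (Fin (n + 1)), e ∈ Δ.faces ∧ e.card = 2 ∧ v ∈ e

/-- The exponent of the squarefree monomial `X_σ = ∏_{i ∈ σ} X_i`. -/
noncomputable def expOf {n : ℕ} (s : Finset (Fin (n + 1))) : Fin (n + 1) →₀ ℕ :=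
  ∑ i ∈ s, Finsupp.single i 1

/-- The (vector representatives of the) points of the projective variety `V(I)`. -/
def projZeros {ι : Type*} [Fintype ι] {K : Type*} [Field K] (I : Ideal (MvPolynomial ι K)) :
    Set (ι → K) :=
  {x | x ≠ 0 ∧ ∀ f ∈ I, eval x f = 0}

/-- The points of the projective variety `V(I)`, as a subset of projective space. -/
def projV {n : ℕ} {K : Type*} [Field K] (I : Ideal (MvPolynomial (Fin (n + 1)) K)) :
    Set (Projectivization K (Fin (n + 1) → K)) :=
  {p | ∀ f ∈ I, eval p.rep f = 0}

/-- The rank at the point `x` of the Jacobian matrix of the ideal `I`. -/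
noncomputable def jacobianRank {ι : Type*} [Fintype ι] {K : Type*} [Field K]
    (I : Ideal (MvPolynomial ι K)) (x : ι → K) : ℕ :=
  Module.finrank K
    (Submodule.span K {w : ι → K | ∃ f ∈ I, w = fun i => eval x (pderiv i f)})

/-- The projective variety `V(I)` is connected. -/
def IsConnectedProjVariety {n : ℕ} {K : Type*} [Field K]
    (I : Ideal (MvPolynomial (Fin (n + 1)) K)) : Prop :=
  (projZeros I).Nonempty ∧
    ∀ J₁ J₂ : Ideal (MvPolynomial (Fin (n + 1)) K), IsHomog J₁ → IsHomog J₂ →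
      projZeros I ⊆ projZeros J₁ ∪ projZeros J₂ →
      projZeros I ∩ (projZeros J₁ ∩ projZeros J₂) = ∅ →
      projZeros I ⊆ projZeros J₁ ∨ projZeros I ⊆ projZeros J₂


theorem aux_hom_deg {K : Type*} [Field K] {ι : Type*} {p : MvPolynomial ι K} {d : ℕ}
    (hp : p.IsHomogeneous d) {s : ι →₀ ℕ} (hs : coeff s p ≠ 0) : s.degree = d := by
  rw [Finsupp.degree_eq_weight_one]
  exact hp hs

theorem aux_fse {K : Type*} [Field K] {n : ℕ} (p : MvPolynomial (Fin n) K) :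
    finSuccEquiv K n (rename Fin.succ p) = Polynomial.C p := by
  induction p using MvPolynomial.induction_on with
  | C a => simp only [rename_C]; exact finSuccEquiv_apply K n (C a) ▸ by simp
  | add p q hp hq => simp only [map_add, hp, hq]
  | mul_X p i hp => simp only [map_mul, hp, rename_X, finSuccEquiv_X_succ]

theorem aux_pd0 {K : Type*} [Field K] {n : ℕ} (p : MvPolynomial (Fin n) K) :
    pderiv (0 : Fin (n + 1)) (rename Fin.succ p) = 0 := by
  induction p using MvPolynomial.induction_on with
  | C a => simp
  | add p q hp hq => simp [hp, hq]
  | mul_X p i hp => simp [hp, pderiv_X]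

theorem aux_elim {K : Type*} [Field K] {n : ℕ} (g : MvPolynomial (Fin (n + 1)) K)
    (l q : MvPolynomial (Fin n) K)
    (hg : g = X 0 * rename Fin.succ l + rename Fin.succ q)
    (f : MvPolynomial (Fin (n + 1)) K) :
    ∃ (d : ℕ) (h : MvPolynomial (Fin (n + 1)) K) (r : MvPolynomial (Fin n) K),
      (rename Fin.succ l) ^ d * f = g * h + rename Fin.succ r := by
  induction f using MvPolynomial.induction_on with
  | C a => exact ⟨0, 0, C a, by simp⟩
  | add p p' hp hp' =>
    obtain ⟨d, h, r, e⟩ := hp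
    obtain ⟨d', h', r', e'⟩ := hp'
    refine ⟨d + d', (rename Fin.succ l) ^ d' * h + (rename Fin.succ l) ^ d * h',
      l ^ d' * r + l ^ d * r', ?_⟩
    simp only [map_add, map_mul, map_pow]
    linear_combination (rename Fin.succ l) ^ d' * e + (rename Fin.succ l) ^ d * e'
  | mul_X p i hp =>
    obtain ⟨d, h, r, e⟩ := hp
    refine Fin.cases ?_ (fun k => ?_) i
    · refine ⟨d + 1, rename Fin.succ l * h * X 0 + rename Fin.succ r, - (q * r), ?_⟩
      simp only [map_neg, map_mul]
      linear_combination (rename Fin.succ l) * X 0 * e - rename Fin.succ r * hg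
    · refine ⟨d, h * X k.succ, r * X k, ?_⟩
      simp only [map_mul, rename_X]
      linear_combination X k.succ * e

theorem aux_scale_mem {K : Type*} [Field K] {ι : Type*} 
    (I : Ideal (MvPolynomial ι K)) (hI : IsHomog I) (c : K)
    (f : MvPolynomial ι K) (hf : f ∈ I) : aeval (fun i => C c * X i : ι → MvPolynomial ι K) f ∈ I := by
  have key : ∀ (p : MvPolynomial ι K) (d : ℕ), p.IsHomogeneous d →
      aeval (fun i => C c * X i : ι → MvPolynomial ι K) p = C (c ^ d) * p := by
    intro p d hp
    conv_rhs => rw [p.as_sum]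
    conv_lhs => rw [p.as_sum]
    rw [map_sum, Finset.mul_sum]
    refine Finset.sum_congr rfl fun s hs => ?_
    have hd : s.degree = d := by
      exact aux_hom_deg hp (mem_support_iff.mp hs)
    rw [aeval_monomial, C_mul_monomial, monomial_eq, ← hd]
    simp only [Finsupp.prod, mul_pow, Finset.prod_mul_distrib, Finset.prod_pow_eq_pow_sum, Finsupp.degree_apply, map_mul, map_pow]
    simp only [algebraMap_eq]
    ring
  rw [← sum_homogeneousComponent f, map_sum]
  refine Ideal.sum_mem _ fun d _ => ?_
  rw [key _ d (homogeneousComponent_isHomogeneous d f)]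
  exact Ideal.mul_mem_left _ _ (hI f hf d)

theorem aux_scale_mem' {K : Type*} [Field K] {n : ℕ}
    (I : Ideal (MvPolynomial (Fin (n + 1)) K)) (hI : IsHomog I) (c : K)
    (f : MvPolynomial (Fin n) K)
    (hf : f ∈ Ideal.comap (rename (Fin.succ : Fin n → Fin (n + 1))) I) :
    aeval (fun i => C c * X i : Fin n → MvPolynomial (Fin n) K) f ∈
      Ideal.comap (rename (Fin.succ : Fin n → Fin (n + 1))) I := by
  rw [Ideal.mem_comap] at hf ⊢
  have := aux_scale_mem I hI c _ hf
  convert this using 1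
  rw [aeval_rename]
  change ((rename Fin.succ).comp (aeval _)) f = _
  congr 1
  ext i
  simp

theorem aux_eval_scale {K : Type*} [Field K] {ι : Type*} (c : K) (x : ι → K)
    (f : MvPolynomial ι K) :
    eval x (aeval (fun i => C c * X i : ι → MvPolynomial ι K) f) = eval (c • x) f := by
  induction f using MvPolynomial.induction_on with
  | C a => simp
  | add p q hp hq => simp only [map_add, hp, hq]
  | mul_X p i hp => simp only [map_mul, hp, aeval_X, eval_X, eval_C, Pi.smul_apply, smul_eq_mul]

theorem aux_pderiv_scale {K : Type*} [Field K] {ι : Type*} (c : K) (i : ι)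
    (f : MvPolynomial ι K) :
    pderiv i (aeval (fun i => C c * X i : ι → MvPolynomial ι K) f) =
      C c * aeval (fun i => C c * X i : ι → MvPolynomial ι K) (pderiv i f) := by
  classical
  induction f using MvPolynomial.induction_on with
  | C a => simp
  | add p q hp hq => simp only [map_add, hp, hq, mul_add]
  | mul_X p k hp =>
    simp only [map_mul, aeval_X, Derivation.leibniz, hp, smul_eq_mul, pderiv_C, pderiv_X, map_add]
    by_cases h : k = i
    · subst h; simp; ring
    · simp [Pi.single_apply, h]; ring

theorem aux_span_scale_le {K : Type*} [Field K] {n : ℕ}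
    (I : Ideal (MvPolynomial (Fin (n + 1)) K)) (hI : IsHomog I) (c : K) (hc : c ≠ 0)
    (x : Fin n → K) :
    Submodule.span K {w : Fin n → K | ∃ f ∈ Ideal.comap (rename (Fin.succ : Fin n → Fin (n + 1))) I,
      w = fun i => eval (c • x) (pderiv i f)} ≤
    Submodule.span K {w : Fin n → K | ∃ f ∈ Ideal.comap (rename (Fin.succ : Fin n → Fin (n + 1))) I,
      w = fun i => eval x (pderiv i f)} := by
  rw [Submodule.span_le]
  rintro w ⟨f, hf, rfl⟩
  have : (fun i => eval (c • x) (pderiv i f)) = c⁻¹ • fun i => eval x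
      (pderiv i (aeval (fun i => C c * X i : Fin n → MvPolynomial (Fin n) K) f)) := by
    ext i
    rw [Pi.smul_apply, aux_pderiv_scale, map_mul, aux_eval_scale, eval_C, smul_eq_mul,
      inv_mul_cancel_left₀ hc]
  rw [this]
  exact Submodule.smul_mem _ _ (Submodule.subset_span ⟨_, aux_scale_mem' I hI c f hf, rfl⟩)

theorem aux_rank_scale {K : Type*} [Field K] {n : ℕ}
    (I : Ideal (MvPolynomial (Fin (n + 1)) K)) (hI : IsHomog I) (c : K) (hc : c ≠ 0)
    (x : Fin n → K) :
    jacobianRank (Ideal.comap (rename (Fin.succ : Fin n → Fin (n + 1))) I) (c • x) =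
    jacobianRank (Ideal.comap (rename (Fin.succ : Fin n → Fin (n + 1))) I) x := by
  unfold jacobianRank
  have h := le_antisymm (aux_span_scale_le I hI c hc x) (by
    have := aux_span_scale_le I hI c⁻¹ (inv_ne_zero hc) (c • x)
    rwa [smul_smul, inv_mul_cancel₀ hc, one_smul] at this)
  rw [h]

theorem aux_eval_coord {K : Type*} [Field K] {n : ℕ} (p : MvPolynomial (Fin n) K) (d : ℕ)
    (hp : p.IsHomogeneous d) (a : Fin n) (c : K) :
    eval (c • fun i : Fin n => if i = a then (1 : K) else 0) p =
      coeff (Finsupp.single a d) p * c ^ d := by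
  rw [eval_eq, Finset.sum_eq_single (Finsupp.single a d)]
  · congr 1
    by_cases hd : d = 0
    · subst hd; simp
    · rw [Finsupp.support_single_ne_zero _ hd]; simp
  · intro s hs hne
    have hd : s.degree = d := by
      exact aux_hom_deg hp (mem_support_iff.mp hs)
    have : ∃ i ∈ s.support, i ≠ a := by
      by_contra! hcon
      apply hne
      have h2 : s = Finsupp.single a (s a) := by
        ext i
        by_cases hi : i = a
        · subst hi; simp
        · have : s i = 0 := by
            by_contra h
            exact hi (hcon i (Finsupp.mem_support_iff.mpr h))
          simp [this, Finsupp.single_apply, Ne.symm hi]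
      rw [h2, Finsupp.degree_single] at hd
      rw [h2, hd]
    obtain ⟨i, hi, hia⟩ := this
    rw [Finset.prod_eq_zero hi, mul_zero]
    simp [hia, Finsupp.mem_support_iff.mp hi]
  · intro h
    rw [notMem_support_iff.mp h, zero_mul]

theorem aux_decomp {K : Type*} [Field K] {n : ℕ} (g : MvPolynomial (Fin (n + 1)) K)
    (hg : g.IsHomogeneous 2) (h0 : coeff (Finsupp.single 0 2) g = 0) :
    ∃ l q : MvPolynomial (Fin n) K, l.IsHomogeneous 1 ∧ q.IsHomogeneous 2 ∧
      g = X 0 * rename Fin.succ l + rename Fin.succ q ∧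
      ∀ a : Fin n, coeff (Finsupp.single a 1) l =
        coeff (Finsupp.single 0 1 + Finsupp.single a.succ 1) g := by
  have hdeg : (finSuccEquiv K n g).natDegree ≤ 1 := by
    rw [Polynomial.natDegree_le_iff_coeff_eq_zero]
    intro i hi
    ext s
    rw [finSuccEquiv_coeff_coeff, coeff_zero]
    by_contra hne
    have h1 : (Finsupp.cons i s).degree = 2 := by
      exact aux_hom_deg hg hne
    have h2 : i + s.degree = 2 := by
      rw [← h1]
      simp [Finsupp.degree_eq_sum, Fin.sum_univ_succ]
    have hi2 : i = 2 := by omega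
    have hs : s = 0 := by
      rw [← Finsupp.degree_eq_zero_iff]; omega
    subst hi2 hs
    apply hne
    rw [← h0]
    congr 1
    ext k
    refine Fin.cases ?_ (fun k => ?_) k <;> simp
  refine ⟨(finSuccEquiv K n g).coeff 1, (finSuccEquiv K n g).coeff 0,
    hg.finSuccEquiv_coeff_isHomogeneous 1 1 rfl, hg.finSuccEquiv_coeff_isHomogeneous 0 2 rfl, ?_, ?_⟩
  · apply (finSuccEquiv K n).injective
    rw [map_add, map_mul, finSuccEquiv_X_zero, aux_fse, aux_fse]
    conv_lhs => rw [Polynomial.eq_X_add_C_of_natDegree_le_one hdeg]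
    ring
  · intro a
    rw [finSuccEquiv_coeff_coeff]
    congr 1
    ext k
    refine Fin.cases ?_ (fun k => ?_) k <;> simp [Finsupp.single_apply, Fin.ext_iff]

theorem aux_grad_ren {K : Type*} [Field K] {n : ℕ} (p : MvPolynomial (Fin n) K)
    (y : Fin (n + 1) → K) :
    (fun i => eval y (pderiv i (rename Fin.succ p))) =
      (Fin.cons 0 (fun i => eval (fun k : Fin n => y k.succ) (pderiv i p)) : Fin (n + 1) → K) := by
  ext i
  refine Fin.cases ?_ (fun k => ?_) i
  · simp [aux_pd0]
  · rw [pderiv_rename (Fin.succ_injective n), eval_rename, Fin.cons_succ]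
    rfl

/-- extension by zero -/
noncomputable def auxIota (K : Type*) [Field K] (n : ℕ) : (Fin n → K) →ₗ[K] (Fin (n + 1) → K) where
  toFun v := Fin.cons 0 v
  map_add' v w := by
    ext i; refine Fin.cases ?_ (fun k => ?_) i <;> simp
  map_smul' c v := by
    ext i; refine Fin.cases ?_ (fun k => ?_) i <;> simp

theorem aux_rank {K : Type*} [Field K] {n : ℕ} (I : Ideal (MvPolynomial (Fin (n + 1)) K))
    (g : MvPolynomial (Fin (n + 1)) K) (hgI : g ∈ I)
    (l q : MvPolynomial (Fin n) K)
    (hg : g = X 0 * rename Fin.succ l + rename Fin.succ q)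
    (y : Fin (n + 1) → K) (hy : ∀ f ∈ I, eval y f = 0)
    (hl : eval (fun k : Fin n => y k.succ) l ≠ 0) :
    jacobianRank I y =
      jacobianRank (Ideal.comap (rename (Fin.succ : Fin n → Fin (n + 1))) I)
        (fun k : Fin n => y k.succ) + 1 := by
  have hl' : eval y (rename Fin.succ l) ≠ 0 := by
    rw [eval_rename]; exact hl
  set w₀ : Fin (n + 1) → K := fun i => eval y (pderiv i g) with hw₀
  have hw00 : w₀ 0 ≠ 0 := by
    have : w₀ 0 = eval y (rename Fin.succ l) := by
      simp only [hw₀, hg, map_add, Derivation.leibniz, aux_pd0, pderiv_X_self]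
      simp
    rw [this]; exact hl'
  have hinj : Function.Injective (auxIota K n) := by
    intro v w h
    ext k
    have := congrFun h k.succ
    simpa [auxIota] using this
  set S' := Submodule.span K {w : Fin n → K |
    ∃ f ∈ Ideal.comap (rename (Fin.succ : Fin n → Fin (n + 1))) I,
      w = fun i => eval (fun k : Fin n => y k.succ) (pderiv i f)} with hS'
  have hspan : Submodule.span K {w : Fin (n + 1) → K | ∃ f ∈ I, w = fun i => eval y (pderiv i f)}
      = S'.map (auxIota K n) ⊔ Submodule.span K {w₀} := by
    apply le_antisymm
    · rw [Submodule.span_le]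
      rintro w ⟨f, hf, rfl⟩
      obtain ⟨d, h, r, e⟩ := aux_elim g l q hg f
      have hr : r ∈ Ideal.comap (rename (Fin.succ : Fin n → Fin (n + 1))) I := by
        rw [Ideal.mem_comap]
        have : rename Fin.succ r = (rename Fin.succ l) ^ d * f - g * h := by rw [e]; ring
        rw [this]
        exact I.sub_mem (I.mul_mem_left _ hf) (I.mul_mem_right _ hgI)
      have hv := pow_ne_zero d hl'
      have hmem : eval y (rename Fin.succ l) ^ d • (fun i => eval y (pderiv i f)) ∈
          S'.map (auxIota K n) ⊔ Submodule.span K {w₀} := by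
        have : eval y (rename Fin.succ l) ^ d • (fun i => eval y (pderiv i f)) =
            auxIota K n (fun i => eval (fun k : Fin n => y k.succ) (pderiv i r)) +
              eval y h • w₀ := by
          change _ = Fin.cons 0 _ + _
          rw [← aux_grad_ren]
          ext i
          have := congrArg (fun p => eval y (pderiv i p)) e
          simp only [map_add, Derivation.leibniz, smul_eq_mul, map_mul, hy f hf, hy g hgI,
            map_pow] at this
          simp only [Pi.add_apply, Pi.smul_apply, smul_eq_mul, hw₀]
          linear_combination this
        rw [this]
        exact Submodule.add_mem_sup
          (Submodule.mem_map_of_mem (Submodule.subset_span ⟨r, hr, rfl⟩))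
          (Submodule.smul_mem _ _ (Submodule.mem_span_singleton_self _))
      exact (Submodule.smul_mem_iff _ hv).mp hmem
    · rw [sup_le_iff, Submodule.map_le_iff_le_comap, Submodule.span_le, Submodule.span_le]
      constructor
      · rintro w ⟨f, hf, rfl⟩
        exact Submodule.subset_span ⟨_, hf, (aux_grad_ren f y).symm⟩
      · rintro w rfl
        exact Submodule.subset_span ⟨g, hgI, rfl⟩
  have hinf : S'.map (auxIota K n) ⊓ Submodule.span K {w₀} = ⊥ := by
    rw [eq_bot_iff]
    rintro w ⟨h1, h2⟩
    obtain ⟨v, -, rfl⟩ := h1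
    obtain ⟨c, hc⟩ := Submodule.mem_span_singleton.mp h2
    have h0 := congrFun hc 0
    have : c * w₀ 0 = 0 := by simpa [auxIota] using h0
    have hc0 : c = 0 := (mul_eq_zero.mp this).resolve_right hw00
    rw [Submodule.mem_bot, ← hc, hc0, zero_smul]
  have hfr := Submodule.finrank_sup_add_finrank_inf_eq (S'.map (auxIota K n))
    (Submodule.span K {w₀})
  rw [hinf, finrank_bot, add_zero, ← hspan, finrank_span_singleton (fun h => hw00 (by rw [h]; rfl)),
    ← (Submodule.equivMapOfInjective (auxIota K n) hinj S').finrank_eq] at hfr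
  exact hfr

theorem aux_zero {K : Type*} [Field K] {n : ℕ} (I : Ideal (MvPolynomial (Fin (n + 1)) K))
    (hI : IsHomog I)
    (g : MvPolynomial (Fin (n + 1)) K) (hgI : g ∈ I)
    (l q : MvPolynomial (Fin n) K)
    (hg : g = X 0 * rename Fin.succ l + rename Fin.succ q)
    (x : Fin n → K)
    (hx : ∀ f ∈ Ideal.comap (rename (Fin.succ : Fin n → Fin (n + 1))) I, eval x f = 0)
    (y : Fin (n + 1) → K) (c : K) (hyx : (fun k : Fin n => y k.succ) = c • x)
    (hgy : eval y g = 0)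
    (hl : eval (fun k : Fin n => y k.succ) l ≠ 0) :
    ∀ f ∈ I, eval y f = 0 := by
  intro f hf
  obtain ⟨d, h, r, e⟩ := aux_elim g l q hg f
  have hr : r ∈ Ideal.comap (rename (Fin.succ : Fin n → Fin (n + 1))) I := by
    rw [Ideal.mem_comap]
    have : rename Fin.succ r = (rename Fin.succ l) ^ d * f - g * h := by rw [e]; ring
    rw [this]
    exact I.sub_mem (I.mul_mem_left _ hf) (I.mul_mem_right _ hgI)
  have h1 := hx _ (aux_scale_mem' I hI c r hr)
  rw [aux_eval_scale, ← hyx] at h1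
  have h2 := congrArg (eval y) e
  simp only [map_add, map_mul, map_pow, hgy, eval_rename] at h2
  rw [show eval (y ∘ Fin.succ) r = 0 from h1] at h2
  simp only [zero_mul, add_zero] at h2
  exact (mul_eq_zero.mp h2).resolve_left (pow_ne_zero d hl)

/-- **Statement 10.** Setting: `K` algebraically closed, `X_0 > ⋯ > X_n`, `in_<(I) = I_Δ` for
a graph `Δ` with every `i` a vertex, `X = V(I) ⊆ ℙⁿ` a connected curve, `0` a free vertex of
`Δ`, and `{g_σ}` a Gröbner basis of `I` with `in_<(g_σ) = X_σ`.  Let `X' ⊆ ℙ^{n-1}` be the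
closure of the projection of `X` from `P_0`, defined by the elimination ideal
`I' = I ∩ K[X_1, …, X_n]`.  If the coordinate point `P'_a` lies on `X'` and `X_0X_a` occurs in
some `g_{0j}`, then there is a unique point `Q ∈ X` projecting to `P'_a`, and `X` is singular
at `Q` iff `X'` is singular at `P'_a`. -/
theorem unique_fiber_and_singular_iff {K : Type*} [Field K] [IsAlgClosed K] {n : ℕ}
    (m : MonomialOrder (Fin (n + 1))) (hm : m.Descending)
    (Δ : SComplex n) (hgraph : Δ.IsGraph)
    (hvert : ∀ i : Fin (n + 1), ({i} : Finset (Fin (n + 1))) ∈ Δ.faces)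
    (I : Ideal (MvPolynomial (Fin (n + 1)) K)) (hI : IsHomog I)
    (hin : initialIdeal m I = Δ.srIdeal K)
    (hcurve : ringKrullDim (MvPolynomial (Fin (n + 1)) K ⧸ I) = 2)
    (hconn : IsConnectedProjVariety I)
    (hfree : Δ.FreeVertex 0)
    (g : Finset (Fin (n + 1)) → MvPolynomial (Fin (n + 1)) K)
    (hgI : ∀ s ∈ Δ.mnf, g s ∈ I)
    (hglead : ∀ s ∈ Δ.mnf, m.mdeg (g s) = expOf s)
    -- the coordinate point `P'_a ∈ ℙ^{n-1}` lies on `X' = V(I')`: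
    (a : Fin n)
    (hPa : ∀ f ∈ Ideal.comap (rename (Fin.succ : Fin n → Fin (n + 1))) I,
      eval (fun i : Fin n => if i = a then (1 : K) else 0) f = 0)
    -- `X_0 X_a` occurs in the support of some `g_{0j}`:
    (hj : ∃ j : Fin n, ({0, Fin.succ j} : Finset (Fin (n + 1))) ∈ Δ.mnf ∧
      Finsupp.single (0 : Fin (n + 1)) 1 + Finsupp.single (Fin.succ a) 1 ∈
        (g {0, Fin.succ j}).support) :
    -- there is a unique point `Q ∈ X` with `π(Q) = P'_a`:
    (∃! Q : Projectivization K (Fin (n + 1) → K), Q ∈ projV I ∧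
      ∃ c : K, c ≠ 0 ∧
        (fun i : Fin n => Q.rep i.succ) = c • fun i : Fin n => if i = a then (1 : K) else 0) ∧
    -- and `X` is singular at `Q` iff `X'` is singular at `P'_a`:
    (∀ Q : Projectivization K (Fin (n + 1) → K), Q ∈ projV I →
      (∃ c : K, c ≠ 0 ∧
        (fun i : Fin n => Q.rep i.succ) = c • fun i : Fin n => if i = a then (1 : K) else 0) →
      (¬ jacobianRank I Q.rep = n - 1 ↔
        ¬ jacobianRank (Ideal.comap (rename (Fin.succ : Fin n → Fin (n + 1))) I)
            (fun i : Fin n => if i = a then (1 : K) else 0) = n - 2)) := by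
  obtain ⟨j, hjm, hjs⟩ := hj
  -- n ≥ 2
  have hn : 2 ≤ n := by
    obtain ⟨e, ⟨he, hec, he0⟩, -⟩ := hfree
    by_contra hlt
    have hcard : ({0, Fin.succ j} : Finset (Fin (n + 1))).card = 2 :=
      Finset.card_pair (Fin.succ_ne_zero j).symm
    have huniv : ∀ s : Finset (Fin (n + 1)), s.card = 2 → s = Finset.univ := by
      intro s hs
      apply Finset.eq_univ_of_card
      have := Finset.card_le_univ s
      rw [Fintype.card_fin] at *
      omega
    apply hjm.1
    rw [huniv _ hcard, ← huniv e hec]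
    exact he
  -- homogeneous quadric
  have hg2I := hI _ (hgI _ hjm) 2
  have hg2h := homogeneousComponent_isHomogeneous 2 (g {0, Fin.succ j})
  have h0 : coeff (Finsupp.single 0 2) (homogeneousComponent 2 (g {0, Fin.succ j})) = 0 := by
    rw [coeff_homogeneousComponent, if_pos (by simp)]
    by_contra hne
    have h1 : m.toSyn (Finsupp.single 0 2) ≤ m.toSyn (m.mdeg (g {0, Fin.succ j})) := by
      unfold MonomialOrder.mdeg
      rw [AddEquiv.apply_symm_apply]
      exact Finset.le_sup (f := fun e => m.toSyn e) (mem_support_iff.mpr hne)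
    rw [hglead _ hjm, expOf, Finset.sum_pair (Fin.succ_ne_zero j).symm,
      show (2 : ℕ) = 1 + 1 from rfl, Finsupp.single_add, map_add, map_add] at h1
    have h2 := hm 0 j.succ (Fin.succ_pos j)
    exact absurd (le_of_add_le_add_left h1) (not_le.mpr h2)
  have hca : coeff (Finsupp.single 0 1 + Finsupp.single (Fin.succ a) 1)
      (homogeneousComponent 2 (g {0, Fin.succ j})) ≠ 0 := by
    rw [coeff_homogeneousComponent, if_pos (by simp)]
    exact mem_support_iff.mp hjs
  set G := homogeneousComponent 2 (g {0, Fin.succ j}) with hG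
  obtain ⟨l, q, hlh, hqh, hdec, hcoef⟩ := aux_decomp G hg2h h0
  rw [← hcoef a] at hca
  set la := coeff (Finsupp.single a 1) l with hla
  set qa := coeff (Finsupp.single a 2) q with hqa
  set ea : Fin n → K := fun i : Fin n => if i = a then (1 : K) else 0 with hea
  have hlne : ∀ (y : Fin (n + 1) → K) (c : K), c ≠ 0 → (fun i : Fin n => y i.succ) = c • ea →
      eval (fun i : Fin n => y i.succ) l ≠ 0 := by
    intro y c hc hy
    rw [hy, aux_eval_coord l 1 hlh]
    exact mul_ne_zero hca (pow_ne_zero _ hc)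
  have hgev : ∀ (y : Fin (n + 1) → K) (c : K), (fun i : Fin n => y i.succ) = c • ea →
      eval y G = c * (y 0 * la + c * qa) := by
    intro y c hy
    have hl1 := aux_eval_coord l 1 hlh a c
    have hq1 := aux_eval_coord q 2 hqh a c
    rw [hdec, map_add, map_mul, eval_X, eval_rename, eval_rename]
    change y 0 * eval (fun i : Fin n => y i.succ) l + eval (fun i : Fin n => y i.succ) q = _
    rw [hy, hl1, hq1]
    ring
  refine ⟨?_, ?_⟩
  · set v : Fin (n + 1) → K := Fin.cons (-qa / la) ea with hv
    have hv0 : v ≠ 0 := by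
      intro h
      have := congrFun h a.succ
      simp [hv, hea] at this
    obtain ⟨u, hu⟩ := Projectivization.exists_smul_eq_mk_rep K v hv0
    refine ⟨Projectivization.mk K v hv0, ⟨?_, ?_⟩, ?_⟩
    · have hy : (fun i : Fin n => (Projectivization.mk K v hv0).rep i.succ) = (u : K) • ea := by
        ext i
        rw [← hu]
        simp [hv, Units.smul_def]
      refine aux_zero I hI G hg2I l q hdec ea hPa _ (u : K) hy ?_ (hlne _ _ u.ne_zero hy)
      rw [hgev _ _ hy, ← hu]
      simp only [Units.smul_def, Pi.smul_apply, smul_eq_mul, hv, Fin.cons_zero]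
      field_simp
      ring
    · refine ⟨u, u.ne_zero, ?_⟩
      ext i
      rw [← hu]
      simp [hv, Units.smul_def]
    · rintro Q ⟨hQ, c, hc, hy⟩
      rw [← Q.mk_rep, Projectivization.mk_eq_mk_iff' ]
      refine ⟨c, ?_⟩
      have h1 := hQ G hg2I
      rw [hgev _ _ hy] at h1
      have h2 := (mul_eq_zero.mp h1).resolve_left hc
      ext i
      refine Fin.cases ?_ (fun k => ?_) i
      · simp only [Pi.smul_apply, smul_eq_mul, hv, Fin.cons_zero]
        field_simp
        linear_combination -h2
      · have := congrFun hy k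
        simp only [Pi.smul_apply, smul_eq_mul, hv, Fin.cons_succ] at this ⊢
        exact this.symm
  · rintro Q hQ ⟨c, hc, hy⟩
    have hr := aux_rank I G hg2I l q hdec Q.rep hQ (hlne _ _ hc hy)
    rw [hy, aux_rank_scale I hI c hc] at hr
    rw [hr]
    omega
end
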